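/- Finite-step exactness of consensus propagation on a tree: for every j ≥ 1 and every ordered pair (l,l') of adjacent vertices, m_j[l→l'] = Σ_{l'' ∈ C(l,l'), dist_G(l'', l) ≤ j−1} a[l'']. Consequently, for every j ≥ |𝓛|, m_j[l→l'] = Σ_{l''∈C(l,l')} a[l''] and a[l] + Σ_{l'∈N(l)} m_j[l'→l] = Σ_{l''∈𝓛} a[l''] for every vertex l; that is, consensus propagation on a tree reaches exact summation consensus at every node after finitely many inner iterations. -/

import Mathlib

open SimpleGraph

/-!
The ball of radius `n + 1` about `l` consists of `l` and, for each neighbour `u` of `l`, the part of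
the ball of radius `n` about `u` that lies on the far side of the edge `{u, l}`. In a forest every
edge is a bridge, so these parts are disjoint, and leaving out one neighbour `l'` leaves exactly the
part of the ball on the `l`-side of `{l, l'}`. Summing `a` over this decomposition reproduces the
message recursion, so after `n` iterations a message has collected its side of the edge up to
radius `n`.
-/

section Branch

variable {W : Type*} {G : SimpleGraph W} {u v w x : W}

/-- The side of `u` of the edge `{u, v}`, written `C(u, v)` in the paper: the vertices still
connected to `u` once that edge is deleted. -/
def branch (G : SimpleGraph W) (u v : W) : Set W :=
  {x | (G.deleteEdges {s(u, v)}).Reachable x u}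

theorem mem_branch_of_notMem_edges (p : G.Walk u x) (hp : s(u, v) ∉ p.edges) : x ∈ branch G u v :=
  (p.toDeleteEdge s(u, v) hp).reachable.symm

theorem mem_branch_of_notMem_support (p : G.Walk u x) (hp : v ∉ p.support) : x ∈ branch G u v :=
  mem_branch_of_notMem_edges p fun h => hp (p.snd_mem_support_of_mem_edges h)

theorem self_mem_branch : u ∈ branch G u v :=
  Reachable.refl u

theorem disjoint_branch_swap (hG : G.IsAcyclic) (huv : G.Adj u v) :
    Disjoint (branch G u v) (branch G v u) := by
  refine Set.disjoint_left.mpr fun x (hxu : Reachable _ x u) (hxv : Reachable _ x v) => ?_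
  rw [Sym2.eq_swap] at hxv
  exact isBridge_iff.mp (isAcyclic_iff_forall_adj_isBridge.mp hG huv) (hxu.symm.trans hxv)

theorem exists_walk_notMem_support_of_mem_branch (hG : G.IsAcyclic) (huv : G.Adj u v)
    (hx : x ∈ branch G u v) : ∃ p : G.Walk u x, v ∉ p.support := by
  classical
  obtain ⟨p, hp⟩ := reachable_deleteEdges_iff_exists_walk.mp (Reachable.symm hx)
  refine ⟨p, fun hv => ?_⟩
  have hv_branch : v ∈ branch G u v :=
    mem_branch_of_notMem_edges (p.takeUntil v hv) fun h => hp (p.edges_takeUntil_subset_edges hv h)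
  exact (disjoint_branch_swap hG huv).notMem_of_mem_left hv_branch self_mem_branch

theorem branch_subset_branch (hG : G.IsAcyclic) (huv : G.Adj u v) (huw : u ≠ w) :
    branch G u v ⊆ branch G v w := by
  intro x hx
  obtain ⟨p, hp⟩ := exists_walk_notMem_support_of_mem_branch hG huv hx
  refine mem_branch_of_notMem_edges (.cons huv.symm p) ?_
  rw [Walk.edges_cons, List.mem_cons, not_or]
  exact ⟨mt Sym2.congr_right.mp huw.symm, fun h => hp (p.fst_mem_support_of_mem_edges h)⟩

theorem pairwiseDisjoint_branch (hG : G.IsAcyclic) (v : W) :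
    (G.neighborSet v).PairwiseDisjoint fun u => branch G u v :=
  fun _ hu _ hw huw => (disjoint_branch_swap hG hw).mono_left
    (branch_subset_branch hG (Adj.symm hu) huw)

end Branch

section Ball

variable {W : Type*} {G : SimpleGraph W}

theorem ball_succ_eq_insert_biUnion_branch (c : W) (n : ℕ) :
    G.ball c ((n + 1 : ℕ) : ℕ∞) =
      insert c (⋃ u ∈ G.neighborSet c, branch G u c ∩ G.ball u n) := by
  ext x
  simp only [Set.mem_insert_iff, Set.mem_iUnion₂, Set.mem_inter_iff, mem_ball, exists_prop,
    mem_neighborSet]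
  constructor
  · intro hx
    have hreach : G.Reachable c x := (reachable_of_edist_ne_top hx.ne_top).symm
    obtain ⟨p, hp, hlen⟩ := hreach.exists_path_of_dist
    rw [edist_comm, ← hreach.coe_dist_eq_edist, ← hlen, Nat.cast_lt] at hx
    cases p with
    | nil => exact .inl rfl
    | @cons _ u _ hcu q =>
      have hq : q.length < n := by simpa using hx
      have hcq : c ∉ q.support := ((Walk.cons_isPath_iff hcu q).mp hp).2
      refine .inr ⟨u, hcu, mem_branch_of_notMem_support q hcq, ?_⟩
      rw [edist_comm]
      exact (edist_le q).trans_lt (Nat.cast_lt.mpr hq)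
  · rintro (rfl | ⟨u, hcu, -, hxu⟩)
    · simp
    · calc G.edist x c ≤ G.edist x u + G.edist u c := SimpleGraph.edist_triangle
        _ = G.edist x u + 1 := by rw [edist_eq_one_iff_adj.mpr hcu.symm]
        _ < n + 1 := (ENat.add_lt_add_iff_right ENat.one_ne_top).mpr hxu
        _ = ((n + 1 : ℕ) : ℕ∞) := by norm_cast

theorem branch_inter_ball_succ (hG : G.IsAcyclic) {c v : W} (hcv : G.Adj c v) (n : ℕ) :
    branch G c v ∩ G.ball c ((n + 1 : ℕ) : ℕ∞) =
      insert c (⋃ u ∈ G.neighborSet c \ {v}, branch G u c ∩ G.ball u n) := by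
  rw [ball_succ_eq_insert_biUnion_branch]
  ext x
  simp only [Set.mem_inter_iff, Set.mem_insert_iff, Set.mem_iUnion₂, Set.mem_sdiff,
    Set.mem_singleton_iff, exists_prop]
  constructor
  · rintro ⟨hxc, rfl | ⟨u, hcu, hxu, hball⟩⟩
    · exact .inl rfl
    · refine .inr ⟨u, ⟨hcu, ?_⟩, hxu, hball⟩
      rintro rfl
      exact (disjoint_branch_swap hG hcv).notMem_of_mem_left hxc hxu
  · rintro (rfl | ⟨u, ⟨hcu, huv⟩, hxu, hball⟩)
    · exact ⟨self_mem_branch, .inl rfl⟩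
    · exact ⟨branch_subset_branch hG (Adj.symm hcu) huv hxu, .inr ⟨u, hcu, hxu, hball⟩⟩

theorem finite_ball [G.LocallyFinite] (c : W) (n : ℕ) : (G.ball c n).Finite := by
  induction n generalizing c with
  | zero => simp
  | succ n ih =>
    rw [ball_succ_eq_insert_biUnion_branch]
    exact ((G.neighborSet c).toFinite.biUnion fun u _ => (ih u).inter_of_right _).insert c

theorem mem_ball_iff_dist_lt (hG : G.Connected) {c x : W} {n : ℕ} :
    x ∈ G.ball c n ↔ G.dist x c < n := by
  rw [mem_ball, ← (hG x c).coe_dist_eq_edist, Nat.cast_lt]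

theorem ball_eq_univ_of_card_le [Fintype W] (hG : G.Connected) (c : W) {n : ℕ}
    (hn : Fintype.card W ≤ n) : G.ball c n = Set.univ := by
  refine Set.eq_univ_of_forall fun x => ?_
  obtain ⟨p, hp, hlen⟩ := hG.exists_path_of_dist x c
  exact (mem_ball_iff_dist_lt hG).mpr (hlen ▸ hp.length_lt.trans_le hn)

theorem finsum_insert_biUnion_branch [G.LocallyFinite] {V : Type*} [AddCommMonoid V]
    (hG : G.IsAcyclic) (a : W → V) {c : W} {S : Finset W} (hS : ↑S ⊆ G.neighborSet c) (n : ℕ) :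
    ∑ᶠ x ∈ insert c (⋃ u ∈ (S : Set W), branch G u c ∩ G.ball u n), a x =
      a c + ∑ u ∈ S, ∑ᶠ x ∈ branch G u c ∩ G.ball u n, a x := by
  have hfin : ∀ u ∈ (S : Set W), (branch G u c ∩ G.ball u n).Finite :=
    fun u _ => (finite_ball u n).inter_of_right _
  have hdisj : (S : Set W).PairwiseDisjoint fun u => branch G u c ∩ G.ball u n :=
    ((pairwiseDisjoint_branch hG c).subset hS).mono fun _ => Set.inter_subset_left
  have hc : c ∉ ⋃ u ∈ (S : Set W), branch G u c ∩ G.ball u n := by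
    simp only [Set.mem_iUnion₂, not_exists]
    exact fun u hu hcu =>
      (disjoint_branch_swap hG (hS hu)).notMem_of_mem_left self_mem_branch hcu.1
  rw [finsum_mem_insert _ hc (S.finite_toSet.biUnion hfin),
    finsum_mem_biUnion hdisj S.finite_toSet hfin, finsum_mem_coe_finset]

end Ball

theorem consensus_propagation_finite_step_exactness_general
    {𝓛 : Type*} [DecidableEq 𝓛] (G : SimpleGraph 𝓛) [G.LocallyFinite] (hG : G.IsAcyclic)
    {V : Type*} [AddCommMonoid V]
    (a : 𝓛 → V)
    (m : ℕ → 𝓛 → 𝓛 → V)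
    (hm0 : ∀ l l' : 𝓛, G.Adj l l' → m 0 l l' = 0)
    (hmstep : ∀ (j : ℕ) (l l' : 𝓛), G.Adj l l' →
      m (j + 1) l l' = a l + ∑ l'' ∈ (G.neighborFinset l).erase l', m j l'' l) :
    (∀ (j : ℕ) (l l' : 𝓛), G.Adj l l' → m j l l' = ∑ᶠ x ∈ branch G l l' ∩ G.ball l j, a x)
      ∧ (∀ (j : ℕ) (l : 𝓛),
          a l + ∑ l' ∈ G.neighborFinset l, m j l' l = ∑ᶠ x ∈ G.ball l ((j + 1 : ℕ) : ℕ∞), a x) := by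
  have message_eq : ∀ (j : ℕ) (l l' : 𝓛), G.Adj l l' →
      m j l l' = ∑ᶠ x ∈ branch G l l' ∩ G.ball l j, a x := by
    intro j
    induction j with
    | zero => intro l l' hll'; simp [hm0 l l' hll']
    | succ j ih =>
      intro l l' hll'
      have hcoe : ((G.neighborFinset l).erase l' : Set 𝓛) = G.neighborSet l \ {l'} := by
        rw [Finset.coe_erase, coe_neighborFinset]
      rw [hmstep j l l' hll', branch_inter_ball_succ hG hll', ← hcoe,
        finsum_insert_biUnion_branch hG a (hcoe.trans_subset Set.sdiff_subset)]
      exact congrArg (a l + ·) (Finset.sum_congr rfl fun u hu =>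
        ih u l ((G.mem_neighborFinset l u).mp (Finset.mem_of_mem_erase hu)).symm)
  refine ⟨message_eq, fun j l => ?_⟩
  rw [ball_succ_eq_insert_biUnion_branch, ← coe_neighborFinset,
    finsum_insert_biUnion_branch hG a (coe_neighborFinset G l).subset]
  exact congrArg (a l + ·) (Finset.sum_congr rfl fun u hu =>
    message_eq j u l ((G.mem_neighborFinset l u).mp hu).symm)

open scoped Classical in
/-- Finite-step exactness of consensus propagation on a tree: for every
`j ≥ 1` and ordered pair of adjacent vertices `(l, l')`,
`m_j[l→l'] = ∑_{l'' ∈ C(l,l'), dist(l'',l) ≤ j−1} a l''`.  Consequently, for every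
`j ≥ |𝓛|`, `m_j[l→l'] = ∑_{l''∈C(l,l')} a l''` and every vertex recovers the total sum
`a l + ∑_{l'∈N(l)} m_j[l'→l] = ∑_{l''} a l''`. -/
theorem consensus_propagation_finite_step_exactness
    {𝓛 : Type*} [Fintype 𝓛] [DecidableEq 𝓛] (G : SimpleGraph 𝓛) [DecidableRel G.Adj]
    (hG : G.IsTree)
    {V : Type*} [AddCommGroup V] [Module ℝ V]
    (a : 𝓛 → V)
    (m : ℕ → 𝓛 → 𝓛 → V)
    (hm0 : ∀ l l' : 𝓛, G.Adj l l' → m 0 l l' = 0)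
    (hmstep : ∀ (j : ℕ) (l l' : 𝓛), G.Adj l l' →
      m (j + 1) l l' = a l + ∑ l'' ∈ (G.neighborFinset l).erase l', m j l'' l)
    (Cset : 𝓛 → 𝓛 → Finset 𝓛)
    (hC : ∀ l l' : 𝓛, Cset l l' =
      Finset.univ.filter fun x => (G.deleteEdges {s(l, l')}).Reachable x l) :
    (∀ j : ℕ, 1 ≤ j → ∀ l l' : 𝓛, G.Adj l l' →
        m j l l' = ∑ l'' ∈ (Cset l l').filter (fun x => G.dist x l ≤ j - 1), a l'')
      ∧ (∀ j : ℕ, Fintype.card 𝓛 ≤ j → ∀ l l' : 𝓛, G.Adj l l' →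
          m j l l' = ∑ l'' ∈ Cset l l', a l'')
      ∧ (∀ j : ℕ, Fintype.card 𝓛 ≤ j → ∀ l : 𝓛,
          (a l + ∑ l' ∈ G.neighborFinset l, m j l' l) = ∑ l'' : 𝓛, a l'') := by
  obtain ⟨message_eq, belief_eq⟩ :=
    consensus_propagation_finite_step_exactness_general G hG.isAcyclic a m hm0 hmstep
  have coe_Cset (l l' : 𝓛) : (Cset l l' : Set 𝓛) = branch G l l' := by simp [hC, branch]
  refine ⟨fun j hj l l' h => ?_, fun j hj l l' h => ?_, fun j hj l => ?_⟩
  · rw [message_eq j l l' h, ← finsum_mem_coe_finset]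
    congr! 3 with x
    simp [← coe_Cset, mem_ball_iff_dist_lt hG.connected, Nat.le_sub_one_iff_lt hj]
  · rw [message_eq j l l' h, ball_eq_univ_of_card_le hG.connected l hj, Set.inter_univ, ← coe_Cset,
      finsum_mem_coe_finset]
  · rw [belief_eq, ball_eq_univ_of_card_le hG.connected l (hj.trans j.le_succ), finsum_mem_univ,
      finsum_eq_sum_of_fintype]
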